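/- For every d₀, δ > 0 there exist ε > 0 and a constant C = C(d₀, δ) such that the following holds. Let G be an (ε, δ)-super-regular bipartite graph with parts of size m and density d ≥ d₀. Then there exists a (C/m)-spread probability distribution μ over the perfect matchings of G. -/

import Mathlib

open Finset
open scoped Classical

/-- The density of the pair of vertex sets `(A, B)` in the graph `G`. -/
noncomputable def edgeDensityR {V : Type} (G : SimpleGraph V) (A B : Finset V) : ℝ :=
  (∑ a ∈ A, ((B.filter fun b => G.Adj a b).card : ℝ)) / ((A.card : ℝ) * (B.card : ℝ))

/-- The pair `(A, B)` is `ε`-regular in `G`. -/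
noncomputable def IsRegularPair {V : Type} (G : SimpleGraph V) (A B : Finset V) (ε : ℝ) : Prop :=
  ∀ X ⊆ A, ∀ Y ⊆ B, ε * A.card ≤ X.card → ε * B.card ≤ Y.card →
    |edgeDensityR G X Y - edgeDensityR G A B| ≤ ε

/-- The pair `(A, B)` is `(ε, δ)`-super-regular in `G`: it is `ε`-regular,
`|A| = |B| = N`, and every vertex of one side has at least `δN` neighbours in
the other side. -/
noncomputable def IsSuperRegularPair {V : Type} (G : SimpleGraph V) (A B : Finset V)
    (ε δ : ℝ) (N : ℕ) : Prop :=
  IsRegularPair G A B ε ∧ A.card = N ∧ B.card = N ∧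
    (∀ v ∈ A, δ * N ≤ ((B.filter fun b => G.Adj v b).card : ℝ)) ∧
    (∀ v ∈ B, δ * N ≤ ((A.filter fun a => G.Adj v a).card : ℝ))

/-! The uniformly random perfect matching is spread. View matchings as bijections `σ` from `A` to
its complement, and call a vertex `a` a defect of `σ` if `a` and `σ a` need not be adjacent. A
defect `a` is repaired by a switching `a ↦ σ y`, `y ↦ σ z`, `z ↦ σ a`, where `a ~ σ y`, `y ~ σ z`
and `z ~ σ a`. As long as there are at most `ηm` defects, the minimum degree leaves at least `ηm`
candidates both for `y` and for `z`, so regularity provides `dη²m²` switchings. If `σ a` is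
prescribed, the result and `y` determine `σ`; hence every prescribed edge costs a factor `dη²m` in
the number of matchings, which is the required bound for up to `ηm` prescribed edges.

If more than `ηm` edges are prescribed, the trivial bound `m ^ (m - k)` on the number of matchings
containing them suffices once the total number is known to be at least `(cm) ^ m` for a constant
`c`. To see this, start from all `m! ≥ (m / e) ^ m` bijections, with every vertex a defect, and
repair one vertex at a time at the cost of a constant factor: by a transposition with another
defect while there are at least `ηm` defects, and by the switching above afterwards.

With `ε = δ / 2` one can take `d = η = δ / 2`: the minimum degree bounds the density of the whole
pair below by `δ`, and regularity loses at most `ε` on large subsets. -/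

section Relations

variable {α α' β β' : Type*}

lemma card_interedges_eq_sum (R : α → β → Prop) (X : Finset α) (Y : Finset β) :
    #(Rel.interedges R X Y) = ∑ x ∈ X, #{y ∈ Y | R x y} := by
  simp only [Rel.interedges, card_filter, sum_product]

lemma card_filter_map (p : β → Prop) (f : α ↪ β) (X : Finset α) :
    #{y ∈ X.map f | p y} = #{x ∈ X | p (f x)} := by
  rw [filter_map, card_map]
  rfl

lemma card_interedges_map (R : α' → β' → Prop) (f : α ↪ α') (g : β ↪ β') (X : Finset α)
    (Y : Finset β) :
    #(Rel.interedges R (X.map f) (Y.map g)) =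
      #(Rel.interedges (fun x y => R (f x) (g y)) X Y) := by
  simp only [card_interedges_eq_sum, sum_map, card_filter_map]

lemma card_filter_le_card_filter_compl_add [Fintype α] (p : α → Prop) (I : Finset α) :
    #{x | p x} ≤ #{x ∈ Iᶜ | p x} + #I := by
  refine le_trans (card_le_card fun x hx => ?_) (card_union_le _ _)
  by_cases hxI : x ∈ I <;> simp_all

end Relations

/-- Lower super-regularity of a balanced bipartite relation: both sides have `m` elements, all
degrees are at least `2ηm`, and any two sets of at least `ηm` elements span at least a `d`-fraction
of all pairs. This is the part of super-regularity that produces perfect matchings. The two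
thresholds differ by a factor of two so that a neighbourhood still qualifies for the density
condition after `ηm` vertices are deleted. -/
structure IsLowerSuperRegular {α β : Type*} [Fintype α] [Fintype β] (R : α → β → Prop)
    (d η : ℝ) : Prop where
  card_eq : Fintype.card α = Fintype.card β
  le_degree_left (a : α) : 2 * η * Fintype.card α ≤ #{b | R a b}
  le_degree_right (b : β) : 2 * η * Fintype.card α ≤ #{a | R a b}
  mul_le_card_interedges (X : Finset α) (Y : Finset β) :
    η * Fintype.card α ≤ #X → η * Fintype.card α ≤ #Y →
      d * (#X * #Y) ≤ #(Rel.interedges R X Y)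

/-- The pairs `(y, z)` avoiding `I` such that `a → y → z → a` is a closed walk of the directed
graph `S`. The case `y = z`, with a loop at `y`, is allowed. -/
noncomputable def closedThreeWalks {α : Type*} [Fintype α] (S : α → α → Prop) (I : Finset α)
    (a : α) : Finset (α × α) :=
  Rel.interedges S {y ∈ Iᶜ | S a y} {z ∈ Iᶜ | S z a}

/-- The bijections that respect `R` at every vertex outside `I`; with `I = ∅` these are the perfect
matchings of `R`. -/
noncomputable def matchingsOff {α β : Type*} [Fintype α] [Fintype β] (R : α → β → Prop)
    (I : Finset α) : Finset (α ≃ β) :=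
  {σ | ∀ x ∉ I, R x (σ x)}

/-- The bijections that respect `R` outside `I` and are prescribed by `f` on `J`. -/
noncomputable def pinnedMatchings {α β : Type*} [Fintype α] [Fintype β] (R : α → β → Prop)
    (I J : Finset α) (f : α → β) : Finset (α ≃ β) :=
  {σ ∈ matchingsOff R I | ∀ x ∈ J, σ x = f x}

/-- The switching of `σ` along `a, y, z`: it sends `a ↦ σ y`, `y ↦ σ z`, `z ↦ σ a`. -/
noncomputable def rotate {α β : Type*} (σ : α ≃ β) (a y z : α) : α ≃ β :=
  (Equiv.swap y z).trans ((Equiv.swap a y).trans σ)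

section Rotate

variable {α β : Type*} {σ : α ≃ β} {a x y z : α}

lemma rotate_apply_left (hy : a ≠ y) (hz : a ≠ z) : rotate σ a y z a = σ y := by
  simp [rotate, Equiv.swap_apply_of_ne_of_ne hy hz]

lemma rotate_apply_mid (hz : a ≠ z) (hyz : y ≠ z) : rotate σ a y z y = σ z := by
  simp [rotate, Equiv.swap_apply_of_ne_of_ne hz.symm hyz.symm]

lemma rotate_apply_right : rotate σ a y z z = σ a := by
  simp [rotate]

lemma rotate_apply_of_ne (ha : x ≠ a) (hy : x ≠ y) (hz : x ≠ z) : rotate σ a y z x = σ x := by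
  simp [rotate, Equiv.swap_apply_of_ne_of_ne, *]

lemma rotate_left_injective (a y z : α) : Function.Injective fun σ : α ≃ β => rotate σ a y z := by
  intro σ τ h
  ext x
  simpa [rotate] using DFunLike.congr_fun h (Equiv.swap y z (Equiv.swap a y x))

end Rotate

section Switching

variable {α β : Type*} [Fintype α] [Fintype β] {R : α → β → Prop} {I J : Finset α} {a : α}
  {f : α → β} {σ : α ≃ β} {d η : ℝ}

lemma mem_closedThreeWalks {S : α → α → Prop} {p : α × α} :
    p ∈ closedThreeWalks S I a ↔
      (p.1 ∉ I ∧ S a p.1) ∧ (p.2 ∉ I ∧ S p.2 a) ∧ S p.1 p.2 := by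
  simp [closedThreeWalks, Rel.mem_interedges_iff]

lemma mem_matchingsOff : σ ∈ matchingsOff R I ↔ ∀ x ∉ I, R x (σ x) := by
  simp [matchingsOff]

lemma mem_pinnedMatchings :
    σ ∈ pinnedMatchings R I J f ↔ (∀ x ∉ I, R x (σ x)) ∧ ∀ x ∈ J, σ x = f x := by
  simp [pinnedMatchings, mem_matchingsOff]

lemma rotate_mem_pinnedMatchings (hJI : J ⊆ I) (haJ : a ∉ J)
    (hσ : σ ∈ pinnedMatchings R (insert a I) (insert a J) f) {p : α × α}
    (hp : p ∈ closedThreeWalks (fun x y => R x (σ y)) (insert a I) a) :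
    rotate σ a p.1 p.2 ∈ pinnedMatchings R I J f := by
  obtain ⟨y, z⟩ := p
  simp only [mem_closedThreeWalks, mem_insert, not_or, ← ne_eq] at hp
  obtain ⟨⟨⟨hya, hyI⟩, hay⟩, ⟨⟨hza, hzI⟩, hzs⟩, hyz⟩ := hp
  rw [mem_pinnedMatchings] at hσ ⊢
  refine ⟨fun x hx => ?_, fun x hx => ?_⟩
  · rcases eq_or_ne x z with rfl | hxz
    · rwa [rotate_apply_right]
    rcases eq_or_ne x a with rfl | hxa
    · rwa [rotate_apply_left hya.symm hza.symm]
    rcases eq_or_ne x y with rfl | hxy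
    · rwa [rotate_apply_mid hza.symm hxz]
    · rw [rotate_apply_of_ne hxa hxy hxz]
      exact hσ.1 x (by simp [hxa, hx])
  · rw [rotate_apply_of_ne (ne_of_mem_of_not_mem hx haJ)
      (ne_of_mem_of_not_mem (hJI hx) hyI) (ne_of_mem_of_not_mem (hJI hx) hzI)]
    exact hσ.2 x (mem_insert_of_mem hx)

lemma sum_card_closedThreeWalks_le (hJI : J ⊆ I) (haJ : a ∉ J) :
    ∑ σ ∈ pinnedMatchings R (insert a I) (insert a J) f,
        #(closedThreeWalks (fun x y => R x (σ y)) (insert a I) a) ≤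
      Fintype.card α * #(pinnedMatchings R I J f) := by
  rw [← card_sigma, ← card_univ, ← card_product]
  refine card_le_card_of_injOn (fun q => (q.2.1, rotate q.1 a q.2.1 q.2.2)) ?_ ?_
  · rintro ⟨σ, p⟩ hq
    obtain ⟨hσ, hp⟩ := mem_sigma.1 hq
    simpa using rotate_mem_pinnedMatchings hJI haJ hσ hp
  · -- `z` is recovered as the vertex that is now matched to the prescribed partner of `a`.
    rintro ⟨σ, y, z⟩ hq ⟨σ', y', z'⟩ hq' h
    have hσ := (mem_pinnedMatchings.1 (mem_sigma.1 hq).1).2 a (mem_insert_self a J)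
    have hσ' := (mem_pinnedMatchings.1 (mem_sigma.1 hq').1).2 a (mem_insert_self a J)
    obtain ⟨hy, hrot⟩ := Prod.mk.inj h
    dsimp only at hy hrot hσ hσ'
    subst hy
    obtain rfl : z = z' := (rotate σ a y z).injective <| by
      rw [rotate_apply_right, hσ, ← hσ', ← rotate_apply_right (y := y) (z := z'), hrot]
    rw [rotate_left_injective a y z hrot]

lemma swap_trans_mem_matchingsOff {b : α} (hσ : σ ∈ matchingsOff R I) (hb : b ∈ I)
    (hab : R a (σ b)) : (Equiv.swap a b).trans σ ∈ matchingsOff R (I.erase a) := by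
  rw [mem_matchingsOff] at hσ ⊢
  intro x hx
  rcases eq_or_ne x a with rfl | hxa
  · simpa using hab
  · have hxI : x ∉ I := fun h => hx (mem_erase.2 ⟨hxa, h⟩)
    simpa [Equiv.swap_apply_of_ne_of_ne hxa (ne_of_mem_of_not_mem hb hxI).symm] using hσ x hxI

lemma sum_card_filter_matchingsOff_le (R : α → β → Prop) (I : Finset α) (a : α) :
    ∑ σ ∈ matchingsOff R I, #{b ∈ I | R a (σ b)} ≤ #I * #(matchingsOff R (I.erase a)) := by
  rw [← card_sigma, ← card_product]
  refine card_le_card_of_injOn (fun q => (q.2, (Equiv.swap a q.2).trans q.1)) ?_ ?_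
  · rintro ⟨σ, b⟩ hq
    obtain ⟨hσ, hb⟩ := mem_sigma.1 hq
    obtain ⟨hbI, hab⟩ := mem_filter.1 hb
    exact mem_product.2 ⟨hbI, swap_trans_mem_matchingsOff hσ hbI hab⟩
  · rintro ⟨σ, b⟩ _ ⟨σ', b'⟩ _ h
    obtain ⟨rfl, hswap⟩ := Prod.mk.inj h
    obtain rfl : σ = σ' := by
      ext x
      simpa using DFunLike.congr_fun hswap (Equiv.swap a b x)
    rfl

lemma card_pinnedMatchings_le (R : α → β → Prop) (I J : Finset α) (f : α → β) :
    #(pinnedMatchings R I J f) ≤ Fintype.card β ^ #Jᶜ := by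
  rw [← Fintype.card_coe Jᶜ, ← Fintype.card_fun, ← card_univ]
  refine card_le_card_of_injOn (fun σ (x : ↥Jᶜ) => σ x) (fun _ _ => mem_univ _) ?_
  intro σ hσ τ hτ h
  ext x
  by_cases hx : x ∈ J
  · rw [(mem_pinnedMatchings.1 hσ).2 x hx, (mem_pinnedMatchings.1 hτ).2 x hx]
  · exact congrFun h ⟨x, mem_compl.2 hx⟩

lemma card_matchingsOff_univ (hαβ : Fintype.card α = Fintype.card β) (R : α → β → Prop) :
    #(matchingsOff R univ) = (Fintype.card α).factorial := by
  simp [matchingsOff, Fintype.card_equiv (Fintype.equivOfCardEq hαβ)]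

namespace IsLowerSuperRegular

lemma comp_equiv (h : IsLowerSuperRegular R d η) (σ : α ≃ β) :
    IsLowerSuperRegular (fun x y => R x (σ y)) d η where
  card_eq := rfl
  le_degree_left a := by
    have := card_filter_map (R a) σ.toEmbedding univ
    rw [map_univ_equiv] at this
    exact (h.le_degree_left a).trans_eq (by rw [this]; rfl)
  le_degree_right a := h.le_degree_right (σ a)
  mul_le_card_interedges X Y hX hY := by
    have := h.mul_le_card_interedges X (Y.map σ.toEmbedding) hX (by rwa [card_map])
    rw [card_map, ← map_refl (s := X), card_interedges_map] at this
    simpa using this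

lemma two_mul_le_one [Nonempty α] (h : IsLowerSuperRegular R d η) : 2 * η ≤ 1 := by
  obtain ⟨a⟩ := ‹Nonempty α›
  have hm : (0 : ℝ) < Fintype.card α := by exact_mod_cast Fintype.card_pos_iff.2 ⟨a⟩
  have hdeg : (#{b | R a b} : ℝ) ≤ Fintype.card α := by
    rw [h.card_eq]
    exact_mod_cast card_le_univ _
  nlinarith [h.le_degree_left a]

lemma le_card_closedThreeWalks {S : α → α → Prop} (h : IsLowerSuperRegular S d η) (hd : 0 ≤ d)
    (hη : 0 ≤ η) (hI : #I ≤ η * Fintype.card α) (a : α) :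
    d * η ^ 2 * Fintype.card α ^ 2 ≤ #(closedThreeWalks S I a) := by
  have survive (p : α → Prop) (hp : 2 * η * Fintype.card α ≤ #{x | p x}) :
      η * Fintype.card α ≤ #{x ∈ Iᶜ | p x} := by
    have : (#{x | p x} : ℝ) ≤ #{x ∈ Iᶜ | p x} + #I := by
      exact_mod_cast card_filter_le_card_filter_compl_add p I
    linarith
  have hY := survive (S a) (h.le_degree_left a)
  have hZ := survive (S · a) (h.le_degree_right a)
  calc d * η ^ 2 * Fintype.card α ^ 2
      = d * (η * Fintype.card α * (η * Fintype.card α)) := by ring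
    _ ≤ d * (#{y ∈ Iᶜ | S a y} * #{z ∈ Iᶜ | S z a}) := by gcongr
    _ ≤ #(closedThreeWalks S I a) := h.mul_le_card_interedges _ _ hY hZ

lemma mul_card_pinnedMatchings_insert_le (h : IsLowerSuperRegular R d η) (hd : 0 ≤ d) (hη : 0 ≤ η)
    (hI : #(insert a I) ≤ η * Fintype.card α) (hJI : J ⊆ I) (haJ : a ∉ J) (f : α → β) :
    d * η ^ 2 * Fintype.card α * #(pinnedMatchings R (insert a I) (insert a J) f) ≤
      #(pinnedMatchings R I J f) := by
  have hm : (0 : ℝ) < Fintype.card α := by exact_mod_cast Fintype.card_pos_iff.2 ⟨a⟩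
  refine le_of_mul_le_mul_left ?_ hm
  calc Fintype.card α *
        (d * η ^ 2 * Fintype.card α * #(pinnedMatchings R (insert a I) (insert a J) f))
      = ∑ σ ∈ pinnedMatchings R (insert a I) (insert a J) f,
          d * η ^ 2 * Fintype.card α ^ 2 := by
        rw [sum_const, nsmul_eq_mul]
        ring
    _ ≤ ∑ σ ∈ pinnedMatchings R (insert a I) (insert a J) f,
          (#(closedThreeWalks (fun x y => R x (σ y)) (insert a I) a) : ℝ) := by
        gcongr with σ
        exact (h.comp_equiv σ).le_card_closedThreeWalks hd hη hI a
    _ ≤ Fintype.card α * #(pinnedMatchings R I J f) := by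
        exact_mod_cast sum_card_closedThreeWalks_le (R := R) (f := f) hJI haJ

lemma pow_card_mul_card_pinnedMatchings_le (h : IsLowerSuperRegular R d η) (hd : 0 ≤ d)
    (hη : 0 ≤ η) (hI : #I ≤ η * Fintype.card α) (f : α → β) :
    (d * η ^ 2 * Fintype.card α) ^ #I * #(pinnedMatchings R I I f) ≤ #(matchingsOff R ∅) := by
  induction I using Finset.induction_on with
  | empty => simp [pinnedMatchings]
  | insert a I ha ih =>
    have hI' : (#I : ℝ) ≤ #(insert a I) := by exact_mod_cast card_le_card (subset_insert a I)
    rw [card_insert_of_notMem ha, pow_succ, mul_assoc]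
    refine le_trans ?_ (ih (hI'.trans hI))
    gcongr
    exact h.mul_card_pinnedMatchings_insert_le hd hη hI Subset.rfl ha f

lemma mul_card_matchingsOff_insert_le (h : IsLowerSuperRegular R d η) (hd : 0 ≤ d) (hη : 0 ≤ η)
    (hI : #(insert a I) ≤ η * Fintype.card α) :
    d * η ^ 2 * #(matchingsOff R (insert a I)) ≤ #(matchingsOff R I) := by
  have hm : (0 : ℝ) < Fintype.card α := by exact_mod_cast Fintype.card_pos_iff.2 ⟨a⟩
  have hpin (b : β) : d * η ^ 2 * Fintype.card α * #{σ ∈ matchingsOff R (insert a I) | σ a = b} ≤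
      #(matchingsOff R I) := by
    simpa [pinnedMatchings] using h.mul_card_pinnedMatchings_insert_le hd hη hI
      (empty_subset I) (notMem_empty a) fun _ => b
  have hfib : (#(matchingsOff R (insert a I)) : ℝ) =
      ∑ b, (#{σ ∈ matchingsOff R (insert a I) | σ a = b} : ℝ) := by
    exact_mod_cast card_eq_sum_card_fiberwise (t := univ) fun (σ : α ≃ β) _ => mem_univ (σ a)
  refine le_of_mul_le_mul_left ?_ hm
  calc Fintype.card α * (d * η ^ 2 * #(matchingsOff R (insert a I)))
      = ∑ b, d * η ^ 2 * Fintype.card α * #{σ ∈ matchingsOff R (insert a I) | σ a = b} := by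
        rw [← mul_sum, ← hfib]
        ring
    _ ≤ ∑ _b : β, (#(matchingsOff R I) : ℝ) := sum_le_sum fun b _ => hpin b
    _ = Fintype.card α * #(matchingsOff R I) := by simp [h.card_eq]

lemma exists_mul_card_matchingsOff_le_of_le_card (h : IsLowerSuperRegular R d η)
    (hI : η * Fintype.card α ≤ #I) (hne : I.Nonempty) :
    ∃ a ∈ I, d * #(matchingsOff R I) ≤ #(matchingsOff R (I.erase a)) := by
  have hIpos : (0 : ℝ) < #I := by exact_mod_cast hne.card_pos
  have hsum : ∑ _a ∈ I, #I * (d * #(matchingsOff R I)) ≤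
      ∑ a ∈ I, (#I * #(matchingsOff R (I.erase a)) : ℝ) :=
    calc ∑ _a ∈ I, #I * (d * #(matchingsOff R I))
        = ∑ _σ ∈ matchingsOff R I, d * (#I * #I) := by
          simp only [sum_const, nsmul_eq_mul]
          ring
      _ ≤ ∑ σ ∈ matchingsOff R I, (#(Rel.interedges (fun x y => R x (σ y)) I I) : ℝ) := by
          exact sum_le_sum fun σ _ => (h.comp_equiv σ).mul_le_card_interedges I I hI hI
      _ = ∑ a ∈ I, ∑ σ ∈ matchingsOff R I, (#{b ∈ I | R a (σ b)} : ℝ) := by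
          rw [sum_comm]
          exact_mod_cast sum_congr rfl fun σ _ => card_interedges_eq_sum _ I I
      _ ≤ ∑ a ∈ I, (#I * #(matchingsOff R (I.erase a)) : ℝ) := by
          gcongr with a
          exact_mod_cast sum_card_filter_matchingsOff_le R I a
  obtain ⟨a, ha, hle⟩ := exists_le_of_sum_le hne hsum
  exact ⟨a, ha, le_of_mul_le_mul_left hle hIpos⟩

lemma exists_mul_card_matchingsOff_le (h : IsLowerSuperRegular R d η) (hd : 0 ≤ d) (hη : 0 ≤ η)
    (hne : I.Nonempty) :
    ∃ a ∈ I, d * η ^ 2 * #(matchingsOff R I) ≤ #(matchingsOff R (I.erase a)) := by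
  rcases le_total (#I : ℝ) (η * Fintype.card α) with hI | hI
  · obtain ⟨a, ha⟩ := hne
    have := h.mul_card_matchingsOff_insert_le (a := a) (I := I.erase a) hd hη
    rw [insert_erase ha] at this
    exact ⟨a, ha, this hI⟩
  · obtain ⟨a, ha, hle⟩ := h.exists_mul_card_matchingsOff_le_of_le_card hI hne
    have : Nonempty α := ⟨a⟩
    have hη1 : η ≤ 1 := by linarith [h.two_mul_le_one]
    refine ⟨a, ha, le_trans ?_ hle⟩
    gcongr
    exact mul_le_of_le_one_right hd (pow_le_one₀ hη hη1)

lemma pow_card_mul_card_matchingsOff_le (h : IsLowerSuperRegular R d η) (hd : 0 ≤ d) (hη : 0 ≤ η)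
    (I : Finset α) : (d * η ^ 2) ^ #I * #(matchingsOff R I) ≤ #(matchingsOff R ∅) := by
  induction I using Finset.eraseInduction with
  | H I ih =>
    rcases I.eq_empty_or_nonempty with rfl | hne
    · simp
    obtain ⟨a, ha, hle⟩ := h.exists_mul_card_matchingsOff_le hd hη hne
    refine le_trans ?_ (ih a ha)
    rw [← card_erase_add_one ha, pow_succ, mul_assoc]
    gcongr

lemma card_pow_card_le (h : IsLowerSuperRegular R d η) (hd : 0 < d) (hη : 0 < η) :
    (Fintype.card α : ℝ) ^ Fintype.card α ≤
      (Real.exp 1 / (d * η ^ 2)) ^ Fintype.card α * #(matchingsOff R ∅) := by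
  have hlow := h.pow_card_mul_card_matchingsOff_le hd.le hη.le univ
  rw [card_matchingsOff_univ h.card_eq, card_univ] at hlow
  set m := Fintype.card α
  have hexp : (m : ℝ) ^ m ≤ Real.exp 1 ^ m * m.factorial := by
    rw [Real.exp_one_pow, ← div_le_iff₀ (by positivity)]
    exact Real.pow_div_factorial_le_exp m (by positivity) m
  rw [div_pow, div_mul_eq_mul_div, le_div_iff₀ (by positivity)]
  calc (m : ℝ) ^ m * (d * η ^ 2) ^ m
      ≤ Real.exp 1 ^ m * m.factorial * (d * η ^ 2) ^ m := by gcongr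
    _ = Real.exp 1 ^ m * ((d * η ^ 2) ^ m * m.factorial) := by ring
    _ ≤ Real.exp 1 ^ m * #(matchingsOff R ∅) := by gcongr

lemma matchingsOff_empty_nonempty (h : IsLowerSuperRegular R d η) (hd : 0 < d) (hη : 0 < η) :
    (matchingsOff R ∅).Nonempty := by
  have hpos : (0 : ℝ) < Fintype.card α ^ Fintype.card α := by exact_mod_cast Nat.pow_self_pos
  rw [← card_pos, Nat.pos_iff_ne_zero]
  intro hzero
  have := h.card_pow_card_le hd hη
  rw [hzero, Nat.cast_zero, mul_zero] at this
  linarith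

end IsLowerSuperRegular

/-- The constant in the spread of the uniform perfect matching of a lower super-regular relation.
The base compares `m ^ m` with the number of perfect matchings; the exponent `⌈1 / η⌉` bounds
`m / k` when `k ≥ ηm` edges are prescribed. -/
noncomputable def spreadConstant (d η : ℝ) : ℝ :=
  max 1 (Real.exp 1 / (d * η ^ 2)) ^ ⌈1 / η⌉₊

lemma one_le_spreadConstant (d η : ℝ) : 1 ≤ spreadConstant d η :=
  one_le_pow₀ (le_max_left _ _)

lemma inv_le_spreadConstant (hd : 0 < d) (hη : 0 < η) : (d * η ^ 2)⁻¹ ≤ spreadConstant d η :=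
  calc (d * η ^ 2)⁻¹ ≤ Real.exp 1 * (d * η ^ 2)⁻¹ :=
        le_mul_of_one_le_left (by positivity) (Real.one_le_exp zero_le_one)
    _ ≤ max 1 (Real.exp 1 / (d * η ^ 2)) := le_max_right _ _
    _ ≤ spreadConstant d η :=
        le_self_pow₀ (le_max_left _ _) (Nat.ceil_pos.2 (by positivity)).ne'

lemma pow_le_spreadConstant_pow (hd : 0 < d) (hη : 0 < η) {m k : ℕ} (hk : η * m ≤ k) :
    (Real.exp 1 / (d * η ^ 2)) ^ m ≤ spreadConstant d η ^ k := by
  have hmk : m ≤ ⌈1 / η⌉₊ * k := by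
    have : (m : ℝ) ≤ ⌈1 / η⌉₊ * k :=
      calc (m : ℝ) = 1 / η * (η * m) := by field_simp
        _ ≤ ⌈1 / η⌉₊ * k := by gcongr; exact Nat.le_ceil _
    exact_mod_cast this
  calc (Real.exp 1 / (d * η ^ 2)) ^ m ≤ max 1 (Real.exp 1 / (d * η ^ 2)) ^ m := by
        gcongr
        exact le_max_right _ _
    _ ≤ max 1 (Real.exp 1 / (d * η ^ 2)) ^ (⌈1 / η⌉₊ * k) :=
        pow_le_pow_right₀ (le_max_left _ _) hmk
    _ = spreadConstant d η ^ k := pow_mul _ _ _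

namespace IsLowerSuperRegular

lemma card_pow_mul_card_pinnedMatchings_le_of_card_le (h : IsLowerSuperRegular R d η) (hd : 0 < d)
    (hη : 0 < η) (hI : #I ≤ η * Fintype.card α) (f : α → β) :
    (Fintype.card α : ℝ) ^ #I * #(pinnedMatchings R I I f) ≤
      spreadConstant d η ^ #I * #(matchingsOff R ∅) := by
  calc (Fintype.card α : ℝ) ^ #I * #(pinnedMatchings R I I f)
      = (d * η ^ 2)⁻¹ ^ #I *
          ((d * η ^ 2 * Fintype.card α) ^ #I * #(pinnedMatchings R I I f)) := by
        rw [← mul_assoc, ← mul_pow, inv_mul_cancel_left₀ (by positivity)]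
    _ ≤ spreadConstant d η ^ #I * #(matchingsOff R ∅) := by
        gcongr
        · exact pow_nonneg (zero_le_one.trans (one_le_spreadConstant d η)) _
        · exact inv_le_spreadConstant hd hη
        · exact h.pow_card_mul_card_pinnedMatchings_le hd.le hη.le hI f

lemma card_pow_mul_card_pinnedMatchings_le_of_le_card (h : IsLowerSuperRegular R d η) (hd : 0 < d)
    (hη : 0 < η) (hI : η * Fintype.card α ≤ #I) (f : α → β) :
    (Fintype.card α : ℝ) ^ #I * #(pinnedMatchings R I I f) ≤
      spreadConstant d η ^ #I * #(matchingsOff R ∅) := by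
  have htriv : Fintype.card α ^ #I * #(pinnedMatchings R I I f) ≤
      Fintype.card α ^ Fintype.card α :=
    calc Fintype.card α ^ #I * #(pinnedMatchings R I I f)
        ≤ Fintype.card α ^ #I * Fintype.card α ^ #Iᶜ := by
          gcongr
          rw [h.card_eq]
          exact card_pinnedMatchings_le R I I f
      _ = Fintype.card α ^ Fintype.card α := by rw [← pow_add, card_add_card_compl]
  calc (Fintype.card α : ℝ) ^ #I * #(pinnedMatchings R I I f)
      ≤ (Fintype.card α : ℝ) ^ Fintype.card α := by exact_mod_cast htriv
    _ ≤ (Real.exp 1 / (d * η ^ 2)) ^ Fintype.card α * #(matchingsOff R ∅) :=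
        h.card_pow_card_le hd hη
    _ ≤ spreadConstant d η ^ #I * #(matchingsOff R ∅) := by
        gcongr
        exact pow_le_spreadConstant_pow hd hη hI

lemma card_pinnedMatchings_div_le (h : IsLowerSuperRegular R d η) (hd : 0 < d) (hη : 0 < η)
    (I : Finset α) (f : α → β) :
    (#(pinnedMatchings R I I f) / #(matchingsOff R ∅) : ℝ) ≤
      (spreadConstant d η / Fintype.card α) ^ #I := by
  have hpow : (0 : ℝ) < Fintype.card α ^ #I := by
    rcases I.eq_empty_or_nonempty with rfl | ⟨a, -⟩
    · simp
    · exact pow_pos (by exact_mod_cast Fintype.card_pos_iff.2 ⟨a⟩) _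
  have hcard : (0 : ℝ) < #(matchingsOff R ∅) := by
    exact_mod_cast (h.matchingsOff_empty_nonempty hd hη).card_pos
  rw [div_pow, div_le_div_iff₀ hcard hpow, mul_comm]
  rcases le_total (#I : ℝ) (η * Fintype.card α) with hI | hI
  · exact h.card_pow_mul_card_pinnedMatchings_le_of_card_le hd hη hI f
  · exact h.card_pow_mul_card_pinnedMatchings_le_of_le_card hd hη hI f

lemma uniformOfFintype_forall_apply_eq_le (h : IsLowerSuperRegular R d η) (hd : 0 < d)
    (hη : 0 < η) [Nonempty ↥(matchingsOff R ∅)] (I : Finset α) (f : α → β) :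
    (PMF.uniformOfFintype ↥(matchingsOff R ∅)).toOuterMeasure {σ | ∀ x ∈ I, σ.1 x = f x} ≤
      ENNReal.ofReal ((spreadConstant d η / Fintype.card α) ^ #I) := by
  have hcard : Fintype.card {σ : ↥(matchingsOff R ∅) | ∀ x ∈ I, σ.1 x = f x} ≤
      #(pinnedMatchings R I I f) := by
    rw [← Fintype.card_coe]
    refine Fintype.card_le_of_injective (fun σ => ⟨σ.1.1, mem_pinnedMatchings.2
      ⟨fun x _ => mem_matchingsOff.1 σ.1.2 x (notMem_empty x), σ.2⟩⟩) fun σ τ hστ => ?_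
    exact Subtype.ext (Subtype.ext (Subtype.mk.inj hστ))
  have hpos : (0 : ℝ) < #(matchingsOff R ∅) := by
    exact_mod_cast (h.matchingsOff_empty_nonempty hd hη).card_pos
  rw [PMF.toOuterMeasure_uniformOfFintype_apply, Fintype.card_coe]
  refine le_trans ?_ (ENNReal.ofReal_le_ofReal (h.card_pinnedMatchings_div_le hd hη I f))
  rw [ENNReal.ofReal_div_of_pos hpos, ENNReal.ofReal_natCast, ENNReal.ofReal_natCast]
  gcongr

end IsLowerSuperRegular

end Switching

section Graphs

variable {V : Type*} {G : SimpleGraph V} {A B : Finset V}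

/-- The subgraph of `G` consisting of the edges `{a, σ a}`. -/
def bijectionSubgraph (σ : A ≃ B) (hσ : ∀ a : A, G.Adj a (σ a)) : G.Subgraph :=
  ⨆ a, G.subgraphOfAdj (hσ a)

lemma mem_edgeSet_bijectionSubgraph {σ : A ≃ B} {hσ : ∀ a : A, G.Adj a (σ a)} {e : Sym2 V} :
    e ∈ (bijectionSubgraph σ hσ).edgeSet ↔ ∃ a : A, s((a : V), (σ a : V)) = e := by
  simp [bijectionSubgraph, eq_comm]

lemma eq_and_eq_of_mk_eq_mk_of_disjoint (hAB : Disjoint A B) {a a' : A} {b b' : B}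
    (h : s((a : V), (b : V)) = s((a' : V), (b' : V))) : a = a' ∧ b = b' := by
  rcases Sym2.eq_iff.1 h with ⟨ha, hb⟩ | ⟨ha, -⟩
  · exact ⟨Subtype.ext ha, Subtype.ext hb⟩
  · exact absurd ha (disjoint_iff_ne.1 hAB a a.2 b' b'.2)

lemma isPerfectMatching_bijectionSubgraph [Fintype V] (hAB : IsCompl A B) (σ : A ≃ B)
    (hσ : ∀ a : A, G.Adj a (σ a)) : (bijectionSubgraph σ hσ).IsPerfectMatching := by
  refine ⟨.iSup (fun a => .subgraphOfAdj (hσ a)) fun a a' haa' => ?_, fun v => ?_⟩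
  · have hne (b : A) (b' : B) : (b : V) ≠ b' :=
      disjoint_iff_ne.1 hAB.disjoint b b.2 b' b'.2
    simp [hne, (hne _ _).symm, haa'.symm]
  · simp only [bijectionSubgraph, SimpleGraph.Subgraph.verts_iSup, Set.mem_iUnion]
    have hv : v ∈ A ∪ B := by simp [← sup_eq_union, hAB.sup_eq_top]
    rcases mem_union.1 hv with hv | hv
    · exact ⟨⟨v, hv⟩, by simp⟩
    · exact ⟨σ.symm ⟨v, hv⟩, by simp⟩

lemma exists_finset_forall_apply_eq_of_mem_edgeSet {ι : Type*} [Fintype ι] (hAB : Disjoint A B)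
    {e : ι → Sym2 V} (he : Function.Injective e) {τ : A ≃ B} {hτ : ∀ a : A, G.Adj a (τ a)}
    (heτ : ∀ i, e i ∈ (bijectionSubgraph τ hτ).edgeSet) :
    ∃ I : Finset A, #I = Fintype.card ι ∧ ∀ (σ : A ≃ B) (hσ : ∀ a : A, G.Adj a (σ a)),
      (∀ i, e i ∈ (bijectionSubgraph σ hσ).edgeSet) → ∀ a ∈ I, σ a = τ a := by
  choose a ha using fun i => mem_edgeSet_bijectionSubgraph.1 (heτ i)
  have ha_inj : Function.Injective a := fun i j hij => he <| by rw [← ha i, ← ha j, hij]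
  refine ⟨univ.image a, by rw [card_image_of_injective _ ha_inj, card_univ], fun σ hσ heσ => ?_⟩
  simp only [mem_image, mem_univ, true_and, forall_exists_index, forall_apply_eq_imp_iff]
  intro i
  obtain ⟨a', ha'⟩ := mem_edgeSet_bijectionSubgraph.1 (heσ i)
  obtain ⟨rfl, hστ⟩ := eq_and_eq_of_mk_eq_mk_of_disjoint hAB (ha'.trans (ha i).symm)
  exact hστ

end Graphs

section SuperRegularPairs

variable {V : Type} {G : SimpleGraph V} {A B : Finset V} {ε δ : ℝ} {m : ℕ}

lemma edgeDensityR_mul (A B : Finset V) :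
    edgeDensityR G A B * (#A * #B) = #(Rel.interedges G.Adj A B) := by
  rw [edgeDensityR, card_interedges_eq_sum, Nat.cast_sum, div_mul_cancel_of_imp]
  intro h
  rcases mul_eq_zero.1 h with h | h <;> simp [card_eq_zero.1 (Nat.cast_eq_zero.1 h)]

lemma IsSuperRegularPair.le_edgeDensityR (h : IsSuperRegularPair G A B ε δ m) (hm : 0 < m) :
    δ ≤ edgeDensityR G A B := by
  obtain ⟨-, hA, hB, hdeg, -⟩ := h
  have : (0 : ℝ) < m := by exact_mod_cast hm
  rw [edgeDensityR, hA, hB, le_div_iff₀ (by positivity)]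
  calc δ * (m * m) = ∑ _a ∈ A, δ * m := by rw [sum_const, hA, nsmul_eq_mul]; ring
    _ ≤ ∑ a ∈ A, (#{b ∈ B | G.Adj a b} : ℝ) := sum_le_sum hdeg

lemma IsSuperRegularPair.mul_le_card_interedges (h : IsSuperRegularPair G A B ε δ m)
    {X Y : Finset V} (hX : X ⊆ A) (hY : Y ⊆ B) (hXm : ε * m ≤ #X) (hYm : ε * m ≤ #Y) :
    (δ - ε) * (#X * #Y) ≤ #(Rel.interedges G.Adj X Y) := by
  obtain rfl | hm := m.eq_zero_or_pos
  · simp [subset_empty.1 (card_eq_zero.1 h.2.1 ▸ hX)]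
  rw [← edgeDensityR_mul]
  gcongr
  have hreg := (abs_le.1 (h.1 X hX Y hY (by rwa [h.2.1]) (by rwa [h.2.2.1]))).1
  linarith [h.le_edgeDensityR hm]

lemma IsSuperRegularPair.isLowerSuperRegular (h : IsSuperRegularPair G A B ε δ m)
    (hε : 2 * ε ≤ δ) :
    IsLowerSuperRegular (fun (a : A) (b : B) => G.Adj a b) (δ - ε) (δ / 2) := by
  have hA : Fintype.card A = m := by rw [Fintype.card_coe, h.2.1]
  have hB : Fintype.card B = m := by rw [Fintype.card_coe, h.2.2.1]
  have hdeg (C : Finset V) (p : V → Prop) : #{v : C | p v} = #{v ∈ C | p v} :=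
    (card_filter_map p (.subtype (· ∈ C)) univ).symm.trans
      (congrArg (fun Z => #(Z.filter p)) attach_map_val)
  have hsub (C : Finset V) (Z : Finset C) : Z.map (.subtype (· ∈ C)) ⊆ C := fun v hv => by
    obtain ⟨z, -, rfl⟩ := mem_map.1 hv
    exact z.2
  have hεm : ε * m ≤ δ / 2 * m := by
    gcongr
    linarith
  refine ⟨hA.trans hB.symm, fun a => ?_, fun b => ?_, fun X Y hX hY => ?_⟩
  · rw [hA, mul_div_cancel₀ δ two_ne_zero, hdeg B]
    exact h.2.2.2.1 a a.2
  · rw [hA, mul_div_cancel₀ δ two_ne_zero, hdeg A (G.Adj · b)]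
    simpa only [G.adj_comm] using h.2.2.2.2 b b.2
  · rw [hA] at hX hY
    have := h.mul_le_card_interedges (hsub A X) (hsub B Y)
      (by rw [card_map]; exact hεm.trans hX) (by rw [card_map]; exact hεm.trans hY)
    rwa [card_map, card_map, card_interedges_map] at this

end SuperRegularPairs

theorem spread_perfect_matchings_eps_delta_super_regular_general (δ : ℝ) (hδ : 0 < δ) :
    ∃ ε C : ℝ, 0 < ε ∧ 0 < C ∧
      ∀ (V : Type) [Fintype V] [DecidableEq V] (G : SimpleGraph V) (A : Finset V) (m : ℕ),
        IsSuperRegularPair G A Aᶜ ε δ m →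
        ∃ μ : PMF {M : G.Subgraph // M.IsPerfectMatching},
          ∀ (k : ℕ) (e : Fin k → Sym2 V), Function.Injective e →
            μ.toOuterMeasure {M | ∀ i, e i ∈ (M : G.Subgraph).edgeSet} ≤
              ENNReal.ofReal ((C / m) ^ k) := by
  refine ⟨δ / 2, spreadConstant (δ - δ / 2) (δ / 2), by positivity,
    zero_lt_one.trans_le (one_le_spreadConstant _ _), fun V _ _ G A m hreg => ?_⟩
  have h := hreg.isLowerSuperRegular (by linarith)
  have hd : 0 < δ - δ / 2 := by linarith
  have : Nonempty ↥(matchingsOff _ ∅) := (h.matchingsOff_empty_nonempty hd (half_pos hδ)).to_subtype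
  let μ := PMF.uniformOfFintype ↥(matchingsOff (fun (a : A) (b : ↥Aᶜ) => G.Adj a b) ∅)
  refine ⟨μ.map fun σ => ⟨bijectionSubgraph σ.1 fun a => mem_matchingsOff.1 σ.2 a (notMem_empty a),
    isPerfectMatching_bijectionSubgraph isCompl_compl _ _⟩, fun k e he => ?_⟩
  rw [PMF.toOuterMeasure_map_apply]
  obtain hempty | ⟨τ, hτ⟩ := Set.eq_empty_or_nonempty (_ ⁻¹' _)
  · rw [hempty]; simp
  obtain ⟨I, hI, hagree⟩ := exists_finset_forall_apply_eq_of_mem_edgeSet disjoint_compl_right he hτ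
  calc _ ≤ μ.toOuterMeasure {σ | ∀ a ∈ I, σ.1 a = τ.1 a} :=
        μ.toOuterMeasure.mono fun σ hσ => hagree σ.1 _ hσ
    _ ≤ _ := h.uniformOfFintype_forall_apply_eq_le hd (half_pos hδ) I τ.1
    _ = _ := by rw [hI, Fintype.card_coe, hreg.2.1, Fintype.card_fin]

theorem spread_perfect_matchings_eps_delta_super_regular (d₀ δ : ℝ)
    (hd₀ : 0 < d₀) (hδ : 0 < δ) :
    ∃ ε C : ℝ, 0 < ε ∧ 0 < C ∧
      ∀ (V : Type) [Fintype V] [DecidableEq V] (G : SimpleGraph V) (A : Finset V) (m : ℕ),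
        A.card = m → Aᶜ.card = m →
        (∀ u v : V, G.Adj u v → (u ∈ A ↔ v ∉ A)) →
        d₀ ≤ edgeDensityR G A Aᶜ →
        IsSuperRegularPair G A Aᶜ ε δ m →
        ∃ μ : PMF {M : G.Subgraph // M.IsPerfectMatching},
          ∀ (k : ℕ) (e : Fin k → Sym2 V), Function.Injective e →
            (∀ i, e i ∈ G.edgeSet) →
            μ.toOuterMeasure {M | ∀ i, e i ∈ (M : G.Subgraph).edgeSet} ≤
              ENNReal.ofReal ((C / m) ^ k) := by
  obtain ⟨ε, C, hε, hC, h⟩ := spread_perfect_matchings_eps_delta_super_regular_general δ hδ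
  refine ⟨ε, C, hε, hC, fun V _ _ G A m _ _ _ _ hreg => ?_⟩
  obtain ⟨μ, hμ⟩ := h V G A m hreg
  exact ⟨μ, fun k e he _ => hμ k e he⟩
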